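/- arXiv:2006.05417 — 2 statements merged into one kernel-verified Lean document; each statement's English description precedes it below -/
import Mathlib

section
/- There exists a positive integer B (depending only on K and α_1,…,α_r) such that for all positive integers n, t_1,…,t_r with t_i dividing n for every i, one has [K:ℚ]·B·[K(ζ_n, α_1^{1/t_1},…,α_r^{1/t_r}) : K] ≥ φ(n)·t_1·t_2⋯t_r, where φ is Euler's totient function. -/
open scoped BigOperators

/-- A fixed primitive `n`-th root of unity in `ℂ` (for `n ≥ 1`). -/
noncomputable def primRoot (n : ℕ) : ℂ := Complex.exp (2 * Real.pi * Complex.I / n)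

/-- The subfield `K(ζ_n, α_1^{1/t_1}, …, α_r^{1/t_r})` of `ℂ`, obtained by adjoining to `K`
a primitive `n`-th root of unity and, for each `i`, all complex roots of `X^{t_i} - α_i`. -/
noncomputable def kummerField (K : IntermediateField ℚ ℂ) {r : ℕ} (α : Fin r → ℂ)
    (n : ℕ) (t : Fin r → ℕ) : IntermediateField ℚ ℂ :=
  K ⊔ IntermediateField.adjoin ℚ ({primRoot n} ∪ ⋃ i, {z : ℂ | z ^ (t i) = α i})

/-- The cyclotomic extension `K(ζ_n)` of `K` inside `ℂ`. -/
noncomputable def cycloField (K : IntermediateField ℚ ℂ) (n : ℕ) : IntermediateField ℚ ℂ :=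
  K ⊔ IntermediateField.adjoin ℚ {primRoot n}

lemma cyclo_le_kummer (K : IntermediateField ℚ ℂ) {r : ℕ} (α : Fin r → ℂ)
    (n : ℕ) (t : Fin r → ℕ) : cycloField K n ≤ kummerField K α n t :=
  sup_le_sup_left (IntermediateField.adjoin.mono _ _ _ Set.subset_union_left) _

lemma base_le_kummer (K : IntermediateField ℚ ℂ) {r : ℕ} (α : Fin r → ℂ)
    (n : ℕ) (t : Fin r → ℕ) : K ≤ kummerField K α n t :=
  le_sup_left

/-!
Write `F` for the number field and `L = F(ζ_n)`, and let `E` be the Kummer field. Since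
`φ(n) ≤ [F : ℚ] [L : F]`, it suffices to show `∏ t_i ≤ C ^ r [E : L]` for a constant `C`.

Choose `β_i ∈ E` with `β_i ^ t_i = α_i` and let `Δ` be the group they generate. The Kummer pairing
`(x, σ) ↦ σ x / x` embeds `Δ / (Δ ∩ Lˣ)` into the characters of `Gal(E/L)`, and there are at most
`[E : L]` of these by Dedekind independence. So the lattice of exponents `e ∈ ℤ^r` with
`∏ β_i ^ e_i ∈ L` has index at most `[E : L]`, and it suffices to have `t_i ∣ C e_i` on it.

If `γ = ∏ β_i ^ e_i` lies in `L`, then `γ ^ n` is a monomial `b` in the `α_i`. As `L / F` is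
abelian, `σ ζ_n = ζ_n ^ k` implies `γ ^ k / σ γ ∈ F`, so `b ^ (k - 1)` is an `n`-th power in `F`;
hence so is `b ^ w`, where `w` is the number of `n`-th roots of unity of `F`
(a theorem of Schinzel).

Finally `Fˣ ⧸ ⟨α_1, …, α_r⟩` has finite torsion by Northcott's theorem: a class whose `n`-th power
is trivial has a representative whose `n`-th power is a monomial in the `α_i` with exponents in
`[0, n)`, hence one of bounded height. So a monomial in the `α_i` is an `n`-th power only if `n`
divides its exponents up to a bounded factor.
-/

section CommGroup

variable {ι G : Type*} [Fintype ι] [CommGroup G]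

/-- The homomorphism `e ↦ ∏ i, a i ^ e i` from the free abelian group `ℤ^ι`. The family `a` is
multiplicatively independent exactly when this homomorphism is injective. -/
def zpowProdHom (a : ι → G) : Multiplicative (ι → ℤ) →* G where
  toFun e := ∏ i, a i ^ e.toAdd i
  map_one' := by simp
  map_mul' e f := by simp [zpow_add, Finset.prod_mul_distrib]

theorem zpowProdHom_ofAdd (a : ι → G) (e : ι → ℤ) :
    zpowProdHom a (.ofAdd e) = ∏ i, a i ^ e i := rfl

theorem zpowProdHom_pow (a : ι → G) (e : ι → ℤ) (n : ℕ) :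
    zpowProdHom a (.ofAdd e) ^ n = zpowProdHom a (.ofAdd fun i ↦ n * e i) := by
  rw [← map_pow, ← ofAdd_nsmul]
  congr 2

theorem zpowProdHom_pow_eq_map {G' : Type*} [CommGroup G'] (f : G →* G') {a : ι → G} {β : ι → G'}
    {n : ℕ} {s t : ι → ℕ} (hn : ∀ i, n = t i * s i) (hβ : ∀ i, β i ^ t i = f (a i)) (e : ι → ℤ) :
    zpowProdHom β (.ofAdd e) ^ n = f (zpowProdHom a (.ofAdd fun i ↦ s i * e i)) := by
  rw [zpowProdHom_pow, zpowProdHom_ofAdd, zpowProdHom_ofAdd, map_prod]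
  refine Finset.prod_congr rfl fun i _ ↦ ?_
  rw [map_zpow, ← hβ, hn i, Nat.cast_mul, mul_assoc, zpow_mul, zpow_natCast]

theorem dvd_card_torsion_mul_of_pow_eq {a : ι → G} (ha : Function.Injective (zpowProdHom a))
    {n : ℕ} (hn : 0 < n) {d : G} {e : ι → ℤ} (hd : d ^ n = zpowProdHom a (.ofAdd e)) (i : ι) :
    (n : ℤ) ∣ Nat.card (CommGroup.torsion (G ⧸ (zpowProdHom a).range)) * e i := by
  set M := Nat.card (CommGroup.torsion (G ⧸ (zpowProdHom a).range))
  have hd_torsion : (d : G ⧸ (zpowProdHom a).range) ∈ CommGroup.torsion _ :=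
    isOfFinOrder_iff_pow_eq_one.mpr
      ⟨n, hn, by rw [← QuotientGroup.mk_pow, QuotientGroup.eq_one_iff, hd]; exact ⟨_, rfl⟩⟩
  have hdM : d ^ M ∈ (zpowProdHom a).range := by
    rw [← QuotientGroup.eq_one_iff, QuotientGroup.mk_pow]
    exact congrArg Subtype.val (pow_card_eq_one' (x := (⟨_, hd_torsion⟩ : CommGroup.torsion _)))
  obtain ⟨f, hf⟩ := hdM
  have heq : zpowProdHom a (.ofAdd fun i ↦ M * e i) =
      zpowProdHom a (.ofAdd fun i ↦ n * f.toAdd i) := by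
    rw [← zpowProdHom_pow, ← zpowProdHom_pow, ← hd, ofAdd_toAdd, hf, pow_right_comm]
  exact ⟨f.toAdd i, congrFun (Multiplicative.ofAdd.injective (ha heq)) i⟩

end CommGroup

section Lattice

variable {ι : Type*} [Fintype ι]

theorem prod_dvd_pow_mul_index {H : Subgroup (Multiplicative (ι → ℤ))} {C : ℕ} (hC : C ≠ 0)
    {t : ι → ℕ} (hdvd : ∀ e : ι → ℤ, .ofAdd e ∈ H → ∀ i, (t i : ℤ) ∣ C * e i) :
    ∏ i, t i ∣ C ^ Fintype.card ι * H.index := by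
  obtain ⟨H, rfl⟩ := AddSubgroup.toSubgroup.surjective H
  have hle : H.map (nsmulAddMonoidHom C) ≤
      AddSubgroup.pi Set.univ fun i ↦ AddSubgroup.zmultiples (t i : ℤ) := by
    rintro _ ⟨e, he, rfl⟩
    simpa [AddSubgroup.mem_pi, Int.mem_zmultiples_iff] using hdvd e he
  have hdvd_index := AddSubgroup.index_dvd_of_le hle
  rwa [AddSubgroup.index_map_of_injective _ (nsmul_right_injective hC),
    AddSubgroup.index_range_nsmul, Module.finrank_fintype_fun_eq_card, AddSubgroup.index_pi,
    Finset.prod_congr rfl fun i _ ↦ Int.index_zmultiples (t i), mul_comm,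
    ← AddSubgroup.index_toSubgroup] at hdvd_index

end Lattice

section Height

open Height

variable {F : Type*} [Field F] [NumberField F]

theorem finite_setOf_pow_eq_prod {ι : Type*} [Fintype ι] (a : ι → F) :
    {b : F | ∃ n : ℕ, 0 < n ∧ ∃ e : ι → ℕ, (∀ i, e i ≤ n) ∧ b ^ n = ∏ i, a i ^ e i}.Finite := by
  refine (NumberField.finite_setOfPred_mulHeight₁_le F (∏ i, mulHeight₁ (a i))).subset ?_
  rintro b ⟨n, hn, e, he, hb⟩
  refine le_of_pow_le_pow_left₀ hn.ne' (Finset.prod_nonneg fun i _ ↦ mulHeight₁_nonneg (a i)) ?_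
  calc mulHeight₁ b ^ n = mulHeight₁ (∏ i, a i ^ e i) := by rw [← mulHeight₁_pow, hb]
    _ ≤ ∏ i, mulHeight₁ (a i ^ e i) := mulHeight₁_prod_le _ _
    _ = ∏ i, mulHeight₁ (a i) ^ e i := by simp only [mulHeight₁_pow]
    _ ≤ ∏ i, mulHeight₁ (a i) ^ n := by
        gcongr with i
        · exact one_le_mulHeight₁ _
        · exact he i
    _ = (∏ i, mulHeight₁ (a i)) ^ n := Finset.prod_pow _ _ _

theorem finite_torsion_units_quotient {Γ : Subgroup Fˣ} (hΓ : Γ.FG) :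
    Finite (CommGroup.torsion (Fˣ ⧸ Γ)) := by
  obtain ⟨s, hs, hsfin⟩ := (Subgroup.fg_iff _).mp hΓ
  have := hsfin.fintype
  have hfin := ((finite_setOf_pow_eq_prod fun a : s ↦ (a.1 : F)).preimage
    Units.val_injective.injOn).image (QuotientGroup.mk (s := Γ))
  refine (hfin.subset fun x hx ↦ ?_).to_subtype
  obtain ⟨b, rfl⟩ := QuotientGroup.mk_surjective x
  obtain ⟨n, hn, hbn⟩ := isOfFinOrder_iff_pow_eq_one.mp hx
  rw [← QuotientGroup.mk_pow, QuotientGroup.eq_one_iff, ← hs,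
    Subgroup.mem_closure_iff_of_fintype] at hbn
  obtain ⟨e, he⟩ := hbn
  have hn' : (0 : ℤ) < n := by exact_mod_cast hn
  let g : Fˣ := ∏ a : s, a.1 ^ (e a / n)
  have hpow : (b / g) ^ n = ∏ a : s, a.1 ^ (e a % n).toNat := by
    rw [div_pow, he, ← Finset.prod_pow, ← Finset.prod_div_distrib]
    refine Finset.prod_congr rfl fun a _ ↦ ?_
    rw [← zpow_natCast, ← zpow_natCast, Int.toNat_of_nonneg (Int.emod_nonneg _ hn'.ne'),
      ← zpow_mul, div_eq_mul_inv, ← zpow_sub, Int.emod_def, mul_comm]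
  refine ⟨b / g, ⟨n, hn, fun a ↦ (e a % n).toNat, fun a ↦ ?_, ?_⟩, ?_⟩
  · exact Int.toNat_le.mpr (Int.emod_lt_of_pos _ hn').le
  · simpa using congrArg Units.val hpow
  · rw [QuotientGroup.eq, inv_div, div_mul_cancel, ← hs]
    exact Subgroup.mem_closure_iff_of_fintype.mpr ⟨_, rfl⟩

end Height

section Galois

variable {F L : Type*} [Field F] [Field L] [Algebra F L]

theorem smul_units_map_algebraMap (σ : Gal(L/F)) (b : Fˣ) :
    σ • Units.map (algebraMap F L : F →* L) b = Units.map (algebraMap F L) b :=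
  Units.ext (σ.commutes b)

theorem mem_range_units_map_algebraMap_iff [IsGalois F L] {u : Lˣ} :
    u ∈ (Units.map (algebraMap F L : F →* L)).range ↔ ∀ σ : Gal(L/F), σ • u = u := by
  constructor
  · rintro ⟨b, rfl⟩ σ
    exact smul_units_map_algebraMap σ b
  · intro hu
    obtain ⟨b, hb⟩ := (InfiniteGalois.mem_range_algebraMap_iff_fixed (u : L)).mpr
      fun σ ↦ congrArg Units.val (hu σ)
    have hb0 : b ≠ 0 := fun h ↦ u.ne_zero (by rw [← hb, h, map_zero])
    exact ⟨Units.mk0 b hb0, Units.ext hb⟩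

theorem smul_div_self_pow_eq_one {n : ℕ} {x : Lˣ} {b : Fˣ}
    (hx : x ^ n = Units.map (algebraMap F L) b) (σ : Gal(L/F)) : (σ • x / x) ^ n = 1 := by
  rw [div_pow, ← smul_pow', hx, smul_units_map_algebraMap, div_self']

section Schinzel

variable {n : ℕ} [NeZero n] {ζ : L}

theorem smul_eq_pow_of_pow_eq_one (hζ : IsPrimitiveRoot ζ n) {σ : Gal(L/F)} {k : ℕ}
    (hσ : σ ζ = ζ ^ k) {ξ : Lˣ} (hξ : ξ ^ n = 1) : σ • ξ = ξ ^ k := by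
  obtain ⟨j, -, hj⟩ := hζ.eq_pow_of_pow_eq_one (congrArg Units.val hξ)
  ext
  rw [AlgEquiv.smul_units_def, Units.coe_map, MonoidHom.coe_coe, Units.val_pow_eq_pow_val, ← hj,
    map_pow, hσ, pow_right_comm]

theorem exists_pow_eq_mul_pow_of_pow_eq_map [IsAbelianGalois F L] (hζ : IsPrimitiveRoot ζ n)
    {γ : Lˣ} {a : Fˣ} (hγ : γ ^ n = Units.map (algebraMap F L) a) {σ : Gal(L/F)} {k : ℕ}
    (hσ : σ ζ = ζ ^ k) : ∃ d : Fˣ, a ^ k = a * d ^ n := by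
  have hfixed (τ : Gal(L/F)) : τ • (γ ^ k / σ • γ) = γ ^ k / σ • γ := by
    set ξ := τ • γ / γ with hξ
    have hτγ : τ • γ = ξ * γ := by rw [hξ, div_mul_cancel]
    have hσξ : σ • ξ = ξ ^ k := smul_eq_pow_of_pow_eq_one hζ hσ (smul_div_self_pow_eq_one hγ τ)
    rw [smul_div', smul_pow', smul_smul, mul_comm' τ σ, ← smul_smul, hτγ, smul_mul', hσξ, mul_pow,
      mul_div_mul_left_eq_div]
  obtain ⟨d, hd⟩ := mem_range_units_map_algebraMap_iff.mpr hfixed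
  refine ⟨d, Units.map_injective (algebraMap F L).injective ?_⟩
  have hσa : σ • γ ^ n = γ ^ n := by rw [hγ, smul_units_map_algebraMap]
  calc Units.map (algebraMap F L : F →* L) (a ^ k)
      = γ ^ n * (γ ^ k / σ • γ) ^ n := by
        rw [map_pow, ← hγ, div_pow, ← smul_pow', hσa, mul_div_cancel, pow_right_comm]
    _ = Units.map (algebraMap F L) (a * d ^ n) := by rw [map_mul, map_pow, hγ, hd]

theorem dvd_card_rootsOfUnity_of_forall_modEq_one [IsGalois F L] (hζ : IsPrimitiveRoot ζ n)
    {m : ℕ} (hm : m ∣ n) (h : ∀ (σ : Gal(L/F)) (k : ℕ), σ ζ = ζ ^ k → k ≡ 1 [MOD m]) :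
    m ∣ Nat.card (rootsOfUnity n F) := by
  obtain ⟨s, hs⟩ := hm
  have hη : IsPrimitiveRoot (ζ ^ s) m := hζ.pow (NeZero.pos n) (hs.trans (mul_comm m s))
  have hm : m ≠ 0 := fun h ↦ NeZero.ne n (by rw [hs, h, zero_mul])
  have hfixed (σ : Gal(L/F)) : σ (ζ ^ s) = ζ ^ s := by
    have hσζ : σ ζ ^ n = 1 := by rw [← map_pow, hζ.pow_eq_one, map_one]
    obtain ⟨k, -, hk⟩ := hζ.eq_pow_of_pow_eq_one hσζ
    have hpow : (ζ ^ s) ^ k = (ζ ^ s) ^ 1 := by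
      rw [(hη.isOfFinOrder hm).pow_eq_pow_iff_modEq, ← hη.eq_orderOf]
      exact h σ k hk.symm
    rw [map_pow, ← hk, pow_right_comm, hpow, pow_one]
  obtain ⟨b, hb⟩ := (InfiniteGalois.mem_range_algebraMap_iff_fixed _).mpr hfixed
  have hbm : IsPrimitiveRoot b m :=
    IsPrimitiveRoot.of_map_of_injective (hb ▸ hη) (algebraMap F L).injective
  let u : rootsOfUnity n F :=
    rootsOfUnity.mkOfPowEq b (by rw [hs, pow_mul, hbm.pow_eq_one, one_pow])
  have hu : orderOf u = m := by
    rw [hbm.eq_orderOf, ← Subgroup.orderOf_coe, ← orderOf_units, rootsOfUnity.coe_mkOfPowEq]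
  exact hu ▸ orderOf_dvd_natCard u

theorem pow_card_rootsOfUnity_mem_range_powMonoidHom [IsAbelianGalois F L]
    (hζ : IsPrimitiveRoot ζ n) {γ : Lˣ} {a : Fˣ}
    (hγ : γ ^ n = Units.map (algebraMap F L) a) :
    a ^ Nat.card (rootsOfUnity n F) ∈ (powMonoidHom n : Fˣ →* Fˣ).range := by
  set P := (powMonoidHom n : Fˣ →* Fˣ).range
  have ha : (a : Fˣ ⧸ P) ^ n = 1 := (QuotientGroup.eq_one_iff _).mpr ⟨a, rfl⟩
  rw [← QuotientGroup.eq_one_iff, QuotientGroup.mk_pow, ← orderOf_dvd_iff_pow_eq_one]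
  refine dvd_card_rootsOfUnity_of_forall_modEq_one hζ (orderOf_dvd_of_pow_eq_one ha)
    fun σ k hσ ↦ ?_
  obtain ⟨d, hd⟩ := exists_pow_eq_mul_pow_of_pow_eq_map hζ hγ hσ
  have hfin : IsOfFinOrder (a : Fˣ ⧸ P) := isOfFinOrder_iff_pow_eq_one.mpr ⟨n, NeZero.pos n, ha⟩
  rw [← hfin.pow_eq_pow_iff_modEq, pow_one, ← QuotientGroup.mk_pow, hd]
  exact QuotientGroup.mk_mul_of_mem a ⟨d, rfl⟩

end Schinzel

end Galois

theorem card_rootsOfUnity_dvd_torsionOrder (F : Type*) [Field F] [NumberField F] (n : ℕ)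
    [NeZero n] : Nat.card (rootsOfUnity n F) ∣ NumberField.Units.torsionOrder F := by
  obtain ⟨ξ, hξ⟩ := IsCyclic.exists_ofOrder_eq_natCard (α := rootsOfUnity n F)
  have := NeZero.of_pos (hξ ▸ Nat.card_pos : 0 < orderOf ξ)
  rw [← hξ]
  apply NumberField.Units.dvd_torsionOrder_of_isPrimitiveRoot (ζ := ((ξ : Fˣ) : F))
  rw [IsPrimitiveRoot.coe_units_iff, IsPrimitiveRoot.coe_submonoidClass_iff]
  exact IsPrimitiveRoot.orderOf ξ

section KummerPairing

theorem card_monoidHom_units_le (G E : Type*) [Group G] [Finite G] [Field E] :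
    Nat.card (G →* Eˣ) ≤ Nat.card G := by
  have := Fintype.ofFinite G
  have := Fintype.ofFinite (G →* Eˣ)
  have hinj : Function.Injective fun χ : G →* Eˣ ↦ (Units.coeHom E).comp χ := fun χ ψ h ↦
    MonoidHom.ext fun g ↦ Units.ext (DFunLike.congr_fun h g)
  have hcard := ((linearIndependent_monoidHom G E).comp _ hinj).fintype_card_le_finrank
  rwa [Module.finrank_fintype_fun_eq_card, ← Nat.card_eq_fintype_card,
    ← Nat.card_eq_fintype_card] at hcard

variable {L E : Type*} [Field L] [Field E] [Algebra L E]

variable (L E) in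
/-- The group of `n`-th radicals over `L` in `E`: the units of `E` whose `n`-th power lies
in `L`. -/
def radicals (n : ℕ) : Subgroup Eˣ :=
  (Units.map (algebraMap L E : L →* E)).range.comap (powMonoidHom n)

variable {n : ℕ} [NeZero n] {ζ : L}

theorem smul_eq_self_of_pow_eq_one (hζ : IsPrimitiveRoot ζ n) {ξ : Eˣ} (hξ : ξ ^ n = 1)
    (σ : Gal(E/L)) : σ • ξ = ξ := by
  have hζE : IsPrimitiveRoot (algebraMap L E ζ) n := hζ.map_of_injective (algebraMap L E).injective
  simpa using smul_eq_pow_of_pow_eq_one hζE (k := 1) (by rw [σ.commutes, pow_one]) hξ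

theorem smul_smul_div_self (hζ : IsPrimitiveRoot ζ n) {x : Eˣ} (hx : x ∈ radicals L E n)
    (σ τ : Gal(E/L)) : σ • (τ • x / x) = τ • x / x := by
  obtain ⟨b, hb⟩ := hx
  exact smul_eq_self_of_pow_eq_one hζ (smul_div_self_pow_eq_one hb.symm τ) σ

/-- The Kummer pairing `(x, σ) ↦ σ x / x`, as a homomorphism from the radicals to the characters of
the Galois group. -/
def kummerPairing (hζ : IsPrimitiveRoot ζ n) : radicals L E n →* (Gal(E/L) →* Eˣ) where
  toFun x :=
    { toFun := fun σ ↦ σ • (x : Eˣ) / x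
      map_one' := by rw [one_smul, div_self']
      map_mul' := fun σ τ ↦ by
        rw [← smul_smul, ← div_mul_div_cancel _ (σ • (x : Eˣ)), ← smul_div',
          smul_smul_div_self hζ x.2, mul_comm] }
  map_one' := by ext; simp
  map_mul' x y := MonoidHom.ext fun σ ↦ by
    change σ • ((x : Eˣ) * y) / (x * y) = _
    rw [smul_mul', mul_div_mul_comm]
    rfl

theorem kummerPairing_apply (hζ : IsPrimitiveRoot ζ n) (x : radicals L E n) (σ : Gal(E/L)) :
    kummerPairing hζ x σ = σ • (x : Eˣ) / x := rfl

variable [IsGalois L E]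

theorem ker_kummerPairing (hζ : IsPrimitiveRoot ζ n) : (kummerPairing (E := E) hζ).ker =
    (Units.map (algebraMap L E : L →* E)).range.subgroupOf (radicals L E n) := by
  ext x
  rw [Subgroup.mem_subgroupOf, mem_range_units_map_algebraMap_iff, MonoidHom.mem_ker,
    DFunLike.ext_iff]
  simp only [kummerPairing_apply, MonoidHom.one_apply, div_eq_one]

variable [FiniteDimensional L E]

theorem relIndex_radicals_ne_zero (hζ : IsPrimitiveRoot ζ n) :
    (Units.map (algebraMap L E : L →* E)).range.relIndex (radicals L E n) ≠ 0 := by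
  rw [Subgroup.relIndex, ← ker_kummerPairing hζ, Subgroup.index_ker]
  exact Nat.card_pos.ne'

theorem relIndex_radicals_le_finrank (hζ : IsPrimitiveRoot ζ n) :
    (Units.map (algebraMap L E : L →* E)).range.relIndex (radicals L E n) ≤
      Module.finrank L E := by
  rw [Subgroup.relIndex, ← ker_kummerPairing hζ, Subgroup.index_ker]
  calc Nat.card (kummerPairing (E := E) hζ).range
      ≤ Nat.card (Gal(E/L) →* Eˣ) := Subgroup.card_le_card_group _
    _ ≤ Nat.card Gal(E/L) := card_monoidHom_units_le _ _
    _ = Module.finrank L E := IsGalois.card_aut_eq_finrank L E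

end KummerPairing

section Tower

open NumberField

variable {F L E : Type*} [Field F] [Field L] [Algebra F L] [Field E] [Algebra F E] [Algebra L E]
  [IsScalarTower F L E]
variable {ι : Type*} [Fintype ι] {a : ι → Fˣ} {β : ι → Eˣ} {n : ℕ} {t : ι → ℕ}

theorem range_zpowProdHom_le_radicals (htn : ∀ i, t i ∣ n)
    (hβ : ∀ i, β i ^ t i = Units.map (algebraMap F E) (a i)) :
    (zpowProdHom β).range ≤ radicals L E n := by
  choose s hs using htn
  rintro _ ⟨e, rfl⟩
  refine ⟨Units.map (algebraMap F L) (zpowProdHom a (.ofAdd fun i ↦ s i * e.toAdd i)), ?_⟩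
  rw [powMonoidHom_apply, ← ofAdd_toAdd e, zpowProdHom_pow_eq_map _ hs hβ]
  exact Units.ext (IsScalarTower.algebraMap_apply F L E _).symm

variable [NumberField F] [NeZero n]

variable (a) in
/-- The order of the torsion of `Fˣ ⧸ ⟨a⟩` times the number of roots of unity of `F`. It bounds
how far exponents `e` with `∏ i, a i ^ e i` an `n`-th power in the `n`-th cyclotomic extension of
`F` can be from being divisible by `n`. The torsion is finite, so `Nat.card` is not its junk
value. -/
noncomputable def kummerDefect : ℕ :=
  Nat.card (CommGroup.torsion (Fˣ ⧸ (zpowProdHom a).range)) * Units.torsionOrder F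

theorem kummerDefect_pos : 0 < kummerDefect a := by
  have := finite_torsion_units_quotient
    ((Group.fg_iff_subgroup_fg _).mp (Group.fg_range (zpowProdHom a)))
  exact Nat.mul_pos Nat.card_pos (Units.torsionOrder_pos F)

theorem dvd_kummerDefect_mul_of_pow_eq_map [IsCyclotomicExtension {n} F L]
    (ha : Function.Injective (zpowProdHom a)) {γ : Lˣ} {e : ι → ℤ}
    (hγ : γ ^ n = Units.map (algebraMap F L) (zpowProdHom a (.ofAdd e))) (i : ι) :
    (n : ℤ) ∣ kummerDefect a * e i := by
  have := IsCyclotomicExtension.isAbelianGalois {n} F L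
  obtain ⟨c, hc⟩ := card_rootsOfUnity_dvd_torsionOrder F n
  obtain ⟨d, hd⟩ := pow_card_rootsOfUnity_mem_range_powMonoidHom
    (IsCyclotomicExtension.zeta_spec n F L) hγ
  have hdc : (d ^ c) ^ n = zpowProdHom a (.ofAdd fun i ↦ Units.torsionOrder F * e i) := by
    rw [pow_right_comm, ← powMonoidHom_apply n, hd, ← pow_mul, ← hc, zpowProdHom_pow]
  rw [kummerDefect, Nat.cast_mul, mul_assoc]
  exact dvd_card_torsion_mul_of_pow_eq ha (NeZero.pos n) hdc i

theorem dvd_kummerDefect_mul_of_mem_range [IsCyclotomicExtension {n} F L]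
    (ha : Function.Injective (zpowProdHom a)) (htn : ∀ i, t i ∣ n)
    (hβ : ∀ i, β i ^ t i = Units.map (algebraMap F E) (a i)) {e : ι → ℤ}
    (he : zpowProdHom β (.ofAdd e) ∈ (Units.map (algebraMap L E : L →* E)).range) (i : ι) :
    (t i : ℤ) ∣ kummerDefect a * e i := by
  choose s hs using htn
  obtain ⟨γ, hγ⟩ := he
  have hγn : γ ^ n = Units.map (algebraMap F L) (zpowProdHom a (.ofAdd fun i ↦ s i * e i)) := by
    apply Units.map_injective (f := (algebraMap L E : L →* E)) (algebraMap L E).injective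
    rw [map_pow, hγ, zpowProdHom_pow_eq_map _ hs hβ]
    exact Units.ext (IsScalarTower.algebraMap_apply F L E _)
  have hdvd := dvd_kummerDefect_mul_of_pow_eq_map ha hγn i
  have hsi : (s i : ℤ) ≠ 0 := by
    exact_mod_cast fun h ↦ NeZero.ne n (by rw [hs i, h, mul_zero])
  rw [hs i, Nat.cast_mul, mul_comm (t i : ℤ), mul_left_comm] at hdvd
  exact (mul_dvd_mul_iff_left hsi).mp hdvd

theorem prod_le_kummerDefect_pow_mul_finrank [IsCyclotomicExtension {n} F L]
    [FiniteDimensional L E] [IsGalois L E] (ha : Function.Injective (zpowProdHom a))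
    (htn : ∀ i, t i ∣ n) (hβ : ∀ i, β i ^ t i = Units.map (algebraMap F E) (a i)) :
    ∏ i, t i ≤ kummerDefect a ^ Fintype.card ι * Module.finrank L E := by
  have hζ := IsCyclotomicExtension.zeta_spec n F L
  have hrad : (zpowProdHom β).range ≤ radicals L E n := range_zpowProdHom_le_radicals htn hβ
  have hrad0 := relIndex_radicals_ne_zero (E := E) hζ
  set N := (Units.map (algebraMap L E : L →* E)).range
  let H := N.comap (zpowProdHom β)
  have hH : H.index = N.relIndex (zpowProdHom β).range := Subgroup.index_comap _ _
  have hH0 : H.index ≠ 0 := by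
    rw [hH]
    exact mt (Subgroup.relIndex_eq_zero_of_le_right hrad) hrad0
  have hdvd : ∏ i, t i ∣ kummerDefect a ^ Fintype.card ι * H.index :=
    prod_dvd_pow_mul_index kummerDefect_pos.ne' fun e he i ↦
      dvd_kummerDefect_mul_of_mem_range ha htn hβ he i
  calc ∏ i, t i ≤ kummerDefect a ^ Fintype.card ι * H.index :=
        Nat.le_of_dvd (Nat.mul_pos (pow_pos kummerDefect_pos _) hH0.bot_lt) hdvd
    _ ≤ kummerDefect a ^ Fintype.card ι * N.relIndex (radicals L E n) := by
        rw [hH]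
        gcongr
        exact Subgroup.relIndex_le_of_le_right hrad hrad0
    _ ≤ kummerDefect a ^ Fintype.card ι * Module.finrank L E := by
        gcongr
        exact relIndex_radicals_le_finrank hζ

theorem totient_le_finrank_mul_finrank [FiniteDimensional F L] {ζ : L} (hζ : IsPrimitiveRoot ζ n) :
    n.totient ≤ Module.finrank ℚ F * Module.finrank F L := by
  have : CharZero L := charZero_of_injective_algebraMap (algebraMap F L).injective
  have : FiniteDimensional ℚ L := FiniteDimensional.trans ℚ F L
  rw [Module.finrank_mul_finrank, ← Polynomial.natDegree_cyclotomic n ℚ,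
    Polynomial.cyclotomic_eq_minpoly_rat hζ (NeZero.pos n)]
  exact minpoly.natDegree_le ζ

theorem totient_mul_prod_le [FiniteDimensional F E] [IsGalois F E]
    (ha : Function.Injective (zpowProdHom a)) {ζ : E} (hζ : IsPrimitiveRoot ζ n)
    (htn : ∀ i, t i ∣ n) (hβ : ∀ i, β i ^ t i = Units.map (algebraMap F E) (a i)) :
    n.totient * ∏ i, t i ≤
      Module.finrank ℚ F * kummerDefect a ^ Fintype.card ι * Module.finrank F E := by
  let L := IntermediateField.adjoin F {ζ}
  have : IsCyclotomicExtension {n} F L := hζ.intermediateField_adjoin_isCyclotomicExtension F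
  calc n.totient * ∏ i, t i
      ≤ (Module.finrank ℚ F * Module.finrank F L) *
          (kummerDefect a ^ Fintype.card ι * Module.finrank L E) :=
        Nat.mul_le_mul (totient_le_finrank_mul_finrank (IsCyclotomicExtension.zeta_spec n F L))
          (prod_le_kummerDefect_pow_mul_finrank ha htn hβ)
    _ = Module.finrank ℚ F * kummerDefect a ^ Fintype.card ι * Module.finrank F E := by
        rw [← Module.finrank_mul_finrank F L E]
        ring

end Tower

section KummerField

open IntermediateField Polynomial

section Adjoin

theorem extendScalars_sup_adjoin {k Ω : Type*} [Field k] [Field Ω] [Algebra k Ω]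
    (K : IntermediateField k Ω) (S : Set Ω) :
    extendScalars (le_sup_left : K ≤ K ⊔ adjoin k S) = adjoin K S := by
  apply restrictScalars_injective k
  rw [extendScalars_restrictScalars, restrictScalars_adjoin_eq_sup]

variable {K Ω : Type*} [Field K] [Field Ω] [Algebra K Ω] {n : ℕ}

theorem adjoin_setOf_pow_eq_one [NeZero n] {ζ : Ω} (hζ : IsPrimitiveRoot ζ n) :
    adjoin K {z : Ω | z ^ n = 1} = adjoin K {ζ} := by
  refine le_antisymm (adjoin_le_iff.mpr fun z hz ↦ ?_)
    (adjoin.mono _ _ _ (Set.singleton_subset_iff.mpr hζ.pow_eq_one))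
  obtain ⟨k, -, rfl⟩ := hζ.eq_pow_of_pow_eq_one hz
  exact pow_mem (mem_adjoin_simple_self K ζ) k

variable [IsAlgClosed Ω]

theorem isSplittingField_adjoin_setOf_pow_eq (hn : 0 < n) (a : K) :
    (X ^ n - C a).IsSplittingField K (adjoin K {z : Ω | z ^ n = algebraMap K Ω a}) := by
  have hroots : (X ^ n - C a).rootSet Ω = {z : Ω | z ^ n = algebraMap K Ω a} := by
    ext z
    simp [mem_rootSet, X_pow_sub_C_ne_zero hn, sub_eq_zero]
  rw [← hroots]
  exact adjoin_rootSet_isSplittingField (IsAlgClosed.splits _)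

theorem finiteDimensional_adjoin_setOf_pow_eq (hn : 0 < n) (a : K) :
    FiniteDimensional K (adjoin K {z : Ω | z ^ n = algebraMap K Ω a}) :=
  have := isSplittingField_adjoin_setOf_pow_eq (Ω := Ω) hn a
  IsSplittingField.finiteDimensional _ (X ^ n - C a)

theorem normal_adjoin_setOf_pow_eq (hn : 0 < n) (a : K) :
    Normal K (adjoin K {z : Ω | z ^ n = algebraMap K Ω a}) :=
  have := isSplittingField_adjoin_setOf_pow_eq (Ω := Ω) hn a
  Normal.of_isSplittingField (X ^ n - C a)

end Adjoin

variable (K : IntermediateField ℚ ℂ) {r : ℕ} (n : ℕ) (t : Fin r → ℕ)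

theorem isPrimitiveRoot_primRoot [NeZero n] : IsPrimitiveRoot (primRoot n) n :=
  Complex.isPrimitiveRoot_exp n (NeZero.ne n)

theorem primRoot_mem_kummerField (α : Fin r → ℂ) : primRoot n ∈ kummerField K α n t :=
  (le_sup_right : _ ≤ kummerField K α n t) (subset_adjoin _ _ (.inl rfl))

variable {n t} in
theorem mem_kummerField_of_pow_eq {α : Fin r → ℂ} {i : Fin r} {z : ℂ} (hz : z ^ t i = α i) :
    z ∈ kummerField K α n t :=
  (le_sup_right : _ ≤ kummerField K α n t)
    (subset_adjoin _ _ (.inr (Set.mem_iUnion.mpr ⟨i, hz⟩)))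

theorem extendScalars_kummerField [NeZero n] (α : Fin r → ℂ) :
    extendScalars (base_le_kummer K α n t) =
      adjoin K {z | z ^ n = 1} ⊔ ⨆ i, adjoin K {z | z ^ t i = α i} := by
  rw [adjoin_setOf_pow_eq_one (isPrimitiveRoot_primRoot n), ← adjoin_iUnion, ← adjoin_union]
  exact extendScalars_sup_adjoin K _

variable {K n t} [NeZero n] {α : Fin r → ℂ}

theorem finiteDimensional_extendScalars_kummerField (hmem : ∀ i, α i ∈ K)
    (ht : ∀ i, 0 < t i) : FiniteDimensional K (extendScalars (base_le_kummer K α n t)) := by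
  have := finiteDimensional_adjoin_setOf_pow_eq (Ω := ℂ) (NeZero.pos n) (1 : K)
  rw [map_one] at this
  have (i : Fin r) : FiniteDimensional K (adjoin K {z | z ^ t i = α i}) :=
    finiteDimensional_adjoin_setOf_pow_eq (Ω := ℂ) (ht i) (⟨α i, hmem i⟩ : K)
  rw [extendScalars_kummerField]
  infer_instance

theorem isGalois_extendScalars_kummerField (hmem : ∀ i, α i ∈ K) (ht : ∀ i, 0 < t i) :
    IsGalois K (extendScalars (base_le_kummer K α n t)) := by
  have := normal_adjoin_setOf_pow_eq (Ω := ℂ) (NeZero.pos n) (1 : K)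
  rw [map_one] at this
  have (i : Fin r) : Normal K (adjoin K {z | z ^ t i = α i}) :=
    normal_adjoin_setOf_pow_eq (Ω := ℂ) (ht i) (⟨α i, hmem i⟩ : K)
  have : Normal K (extendScalars (base_le_kummer K α n t)) := by
    rw [extendScalars_kummerField]
    infer_instance
  exact ⟨⟩

end KummerField

/-- Let `K ⊆ ℂ` be a number field and `α_1,…,α_r ∈ K^×` multiplicatively
independent. There is a positive integer `B` such that for all positive integers
`n, t_1,…,t_r` with `t_i ∣ n` for all `i`, one has
`[K:ℚ]·B·[K(ζ_n, α_1^{1/t_1},…,α_r^{1/t_r}) : K] ≥ φ(n)·t_1⋯t_r`. -/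
theorem kummer_degree_lower_bound {r : ℕ} (K : IntermediateField ℚ ℂ)
    [FiniteDimensional ℚ K] (α : Fin r → ℂ)
    (hmem : ∀ i, α i ∈ K) (hα0 : ∀ i, α i ≠ 0)
    (hind : ∀ e : Fin r → ℤ, ∏ i, α i ^ e i = 1 → e = 0) :
    ∃ B : ℕ, 0 < B ∧ ∀ (n : ℕ) (t : Fin r → ℕ), 0 < n → (∀ i, 0 < t i) →
      (∀ i, t i ∣ n) →
      Nat.totient n * ∏ i, t i ≤
        Module.finrank ℚ K * B *
          Module.finrank K (IntermediateField.extendScalars (base_le_kummer K α n t)) := by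
  have : NumberField K := { to_finiteDimensional := by convert ‹FiniteDimensional ℚ K› }
  let a (i : Fin r) : Kˣ := Units.mk0 ⟨α i, hmem i⟩ fun h ↦ hα0 i (congrArg Subtype.val h)
  have ha : Function.Injective (zpowProdHom a) :=
    (injective_iff_map_eq_one _).mpr fun e he ↦ hind e.toAdd <| by
      have hprod := congrArg (fun u : Kˣ ↦ algebraMap K ℂ u) he
      simpa [zpowProdHom, a] using hprod
  refine ⟨kummerDefect a ^ r, pow_pos kummerDefect_pos r, fun n t hn ht htn ↦ ?_⟩
  have := NeZero.of_pos hn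
  set E := IntermediateField.extendScalars (base_le_kummer K α n t)
  have : FiniteDimensional K E := finiteDimensional_extendScalars_kummerField hmem ht
  have : IsGalois K E := isGalois_extendScalars_kummerField hmem ht
  have hζ : IsPrimitiveRoot (⟨primRoot n, primRoot_mem_kummerField K n t α⟩ : E) n :=
    IsPrimitiveRoot.coe_submonoidClass_iff.mp (isPrimitiveRoot_primRoot n)
  choose z hz using fun i ↦ IsAlgClosed.exists_pow_nat_eq (α i) (ht i)
  have hzE (i : Fin r) : (⟨z i, mem_kummerField_of_pow_eq K (hz i)⟩ : E) ^ t i =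
      Units.map (algebraMap K E : K →* E) (a i) := Subtype.ext (hz i)
  let β (i : Fin r) : Eˣ := Units.ofPow _ _ (ht i).ne' (hzE i)
  -- `convert` identifies the two `ℚ`-algebra structures on `K`.
  convert totient_mul_prod_le ha hζ htn (β := β) fun i ↦ Units.ext (hzE i)
  exact (Fintype.card_fin r).symm
end

section
/- Let γ_1,…,γ_r ∈ K^× be algebraic numbers, none of which is a root of unity, and for each i write γ_i = α_i/β_i with α_i, β_i nonzero elements of the ring of integers O_K. Let t_1,…,t_r be positive integers and let n be a common multiple of the t_i. Set F := K(ζ_n, γ_1^{1/t_1},…,γ_r^{1/t_r}) and t := t_1·t_2⋯t_r. Then log|d_F| ≤ φ(n)·t·( [K:ℚ]·log(n·t) + log|d_K| + 2·∑_{i=1}^r log|N_{K/ℚ}(α_iβ_i)| ), where d_F and d_K are the absolute discriminants of the number fields F and K, N_{K/ℚ} is the field norm from K to ℚ, and φ is Euler's totient function. -/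
open scoped BigOperators

/-!
Let `F = K(δ₁, …, δᵣ)` with `δᵢ ^ sᵢ = aᵢ / bᵢ`. For two embeddings `σ, τ` of `F` over `K`, the
ratios `τ δᵢ / σ δᵢ` are `sᵢ`-th roots of unity, all equal to `1` only if `σ = τ`. Summing
geometric series therefore gives `(∏ sᵢ) x = ∑ⱼ Tr(x ∏ δᵢ ^ (-jᵢ)) ∏ δᵢ ^ jᵢ` over
`0 ≤ jᵢ < sᵢ`. Since `aᵢ δᵢ ^ (-jᵢ)` and `bᵢ δᵢ ^ jᵢ` are integral, `∏ sᵢ aᵢ bᵢ` multiplies the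
trace dual of `𝓞 F` into `𝓞 F`, so it lies in the different of `F / K`. Taking norms,
`|d_F|` divides `(|N(∏ sᵢ aᵢ bᵢ)| |d_K|) ^ [F : K]`. The root of unity `ζ_n` is one more radical,
with `a = b = 1`, and `[F : K] ≤ φ(n) ∏ tᵢ`.
-/

open NumberField Finset IntermediateField Module

section Radicals

theorem sum_piFinset_range_prod_pow {R ι : Type*} [CommRing R] [IsDomain R] [Fintype ι]
    [DecidableEq ι] {s : ι → ℕ} {u : ι → R} [Decidable (u = 1)] (hu : ∀ i, u i ^ s i = 1) :
    ∑ j ∈ Fintype.piFinset fun i ↦ range (s i), ∏ i, u i ^ j i =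
      if u = 1 then ∏ i, (s i : R) else 0 := by
  rw [← prod_univ_sum (fun i ↦ range (s i)) fun i k ↦ u i ^ k]
  split_ifs with hu1
  · simp [hu1]
  · obtain ⟨i, hi⟩ : ∃ i, u i ≠ 1 := Function.ne_iff.mp hu1
    have hgeom : (∑ k ∈ range (s i), u i ^ k) * (u i - 1) = 0 := by
      rw [geom_sum_mul, hu, sub_self]
    exact prod_eq_zero (mem_univ i) ((mul_eq_zero.mp hgeom).resolve_right (sub_ne_zero.mpr hi))

variable {K F ι : Type*} [Field K] [Field F] [Algebra K F] [Fintype ι] [DecidableEq ι]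
  {δ : ι → F} {s : ι → ℕ}

theorem sum_piFinset_range_prod_algHom_div_pow {E : Type*} [Field E] [Algebra K E]
    [Algebra.IsAlgebraic K F] (hδ0 : ∀ i, δ i ≠ 0)
    (hδ : ∀ i, δ i ^ s i ∈ (algebraMap K F).range) (hgen : adjoin K (Set.range δ) = ⊤)
    (σ τ : F →ₐ[K] E) [Decidable (σ = τ)] :
    ∑ j ∈ Fintype.piFinset fun i ↦ range (s i), ∏ i, (τ (δ i) / σ (δ i)) ^ j i =
      if σ = τ then ∏ i, (s i : E) else 0 := by
  classical
  have hratio_pow (i : ι) : (τ (δ i) / σ (δ i)) ^ s i = 1 := by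
    obtain ⟨c, hc⟩ := hδ i
    have hc0 : algebraMap K F c ≠ 0 := hc ▸ pow_ne_zero _ (hδ0 i)
    rw [div_pow, ← map_pow, ← map_pow, ← hc, τ.commutes, ← σ.commutes,
      div_self ((map_ne_zero σ).mpr hc0)]
  have hratio_eq_one : (fun i ↦ τ (δ i) / σ (δ i)) = 1 ↔ σ = τ := by
    constructor
    · intro h
      refine AlgHom.ext_of_adjoin_eq_top (adjoin_eq_top_iff.mp hgen) ?_
      rintro _ ⟨i, rfl⟩
      exact (eq_of_div_eq_one (congrFun h i)).symm
    · rintro rfl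
      exact funext fun i ↦ div_self ((map_ne_zero σ).mpr (hδ0 i))
  rw [sum_piFinset_range_prod_pow (u := fun i ↦ τ (δ i) / σ (δ i)) hratio_pow]
  simp only [hratio_eq_one]

variable [FiniteDimensional K F] [Algebra.IsSeparable K F]

theorem prod_natCast_mul_eq_sum_trace_mul (hδ0 : ∀ i, δ i ≠ 0)
    (hδ : ∀ i, δ i ^ s i ∈ (algebraMap K F).range) (hgen : adjoin K (Set.range δ) = ⊤) (x : F) :
    (∏ i, (s i : F)) * x = ∑ j ∈ Fintype.piFinset fun i ↦ range (s i),
      algebraMap K F (Algebra.trace K F (x * ∏ i, (δ i)⁻¹ ^ j i)) * ∏ i, δ i ^ j i := by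
  classical
  have τ : F →ₐ[K] AlgebraicClosure K := IsAlgClosed.lift
  have hterm (j : ι → ℕ) :
      τ (algebraMap K F (Algebra.trace K F (x * ∏ i, (δ i)⁻¹ ^ j i)) * ∏ i, δ i ^ j i) =
        ∑ σ : F →ₐ[K] AlgebraicClosure K, σ x * ∏ i, (τ (δ i) / σ (δ i)) ^ j i := by
    rw [map_mul, τ.commutes, trace_eq_sum_embeddings (AlgebraicClosure K), sum_mul]
    refine sum_congr rfl fun σ _ ↦ ?_
    simp only [map_mul, map_prod, map_pow, map_inv₀, div_eq_mul_inv, mul_pow, prod_mul_distrib]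
    ring
  refine τ.injective (?_ : τ _ = τ _)
  calc τ ((∏ i, (s i : F)) * x)
      = ∑ σ : F →ₐ[K] AlgebraicClosure K,
          σ x * if σ = τ then ∏ i, (s i : AlgebraicClosure K) else 0 := by
        simp [mul_comm]
    _ = ∑ σ : F →ₐ[K] AlgebraicClosure K, σ x * ∑ j ∈ Fintype.piFinset fun i ↦ range (s i),
          ∏ i, (τ (δ i) / σ (δ i)) ^ j i := by
        refine sum_congr rfl fun σ _ ↦ ?_
        rw [sum_piFinset_range_prod_algHom_div_pow hδ0 hδ hgen σ τ]
    _ = _ := by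
        rw [map_sum, sum_congr rfl fun j _ ↦ hterm j, sum_comm]
        simp_rw [mul_sum]

theorem algebraMap_prod_mul_eq_sum_trace_mul (hδ0 : ∀ i, δ i ≠ 0)
    (hδ : ∀ i, δ i ^ s i ∈ (algebraMap K F).range) (hgen : adjoin K (Set.range δ) = ⊤)
    (a b : ι → K) (x : F) :
    algebraMap K F (∏ i, (s i * (a i * b i))) * x =
      ∑ j ∈ Fintype.piFinset fun i ↦ range (s i),
        algebraMap K F (Algebra.trace K F (x * ∏ i, (algebraMap K F (a i) * (δ i)⁻¹ ^ j i))) *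
          ∏ i, (algebraMap K F (b i) * δ i ^ j i) := by
  have htrace (j : ι → ℕ) :
      Algebra.trace K F (x * ∏ i, (algebraMap K F (a i) * (δ i)⁻¹ ^ j i)) =
        (∏ i, a i) * Algebra.trace K F (x * ∏ i, (δ i)⁻¹ ^ j i) := by
    rw [prod_mul_distrib, ← map_prod, mul_left_comm, ← Algebra.smul_def, map_smul, smul_eq_mul]
  calc algebraMap K F (∏ i, (s i * (a i * b i))) * x
      = (∏ i, algebraMap K F (a i)) * (∏ i, algebraMap K F (b i)) * ((∏ i, (s i : F)) * x) := by
        simp only [map_prod, map_mul, map_natCast, prod_mul_distrib]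
        ring
    _ = _ := by
        rw [prod_natCast_mul_eq_sum_trace_mul hδ0 hδ hgen, mul_sum]
        refine sum_congr rfl fun j _ ↦ ?_
        rw [htrace, (algebraMap K F).map_mul, map_prod, prod_mul_distrib]
        ring

end Radicals

section Different

theorem isIntegral_algebraMap_mul_pow {A B : Type*} [CommRing A] [CommRing B] [Algebra A B]
    {δ : B} {s j : ℕ} {a b : A} (hs : s ≠ 0) (hj : j ≤ s)
    (hδ : δ ^ s * algebraMap A B b = algebraMap A B a) :
    IsIntegral A (algebraMap A B b * δ ^ j) := by
  refine .of_pow (Nat.pos_of_ne_zero hs) ?_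
  have hpow : (algebraMap A B b * δ ^ j) ^ s = algebraMap A B (a ^ j * b ^ (s - j)) := by
    obtain ⟨k, rfl⟩ := Nat.exists_eq_add_of_le hj
    simp only [map_mul, map_pow, ← hδ, Nat.add_sub_cancel_left]
    ring
  exact hpow ▸ isIntegral_algebraMap

variable {A B K L : Type*} [CommRing A] [IsDomain A] [IsIntegrallyClosed A] [Field K] [CommRing B]
  [IsDedekindDomain B] [Field L] [Algebra A K] [IsFractionRing A K] [Algebra B L] [Algebra A B]
  [Algebra K L] [Algebra A L] [IsScalarTower A K L] [IsScalarTower A B L] [IsFractionRing B L]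
  [FiniteDimensional K L] [Algebra.IsSeparable K L] [IsIntegralClosure B A L] [IsTorsionFree A B]

theorem mem_differentIdeal_iff_isIntegral_mul {y : B} :
    y ∈ differentIdeal A B ↔
      ∀ x ∈ Submodule.traceDual A K (1 : Submodule B L), IsIntegral A (algebraMap B L y * x) := by
  have hcoe : y ∈ differentIdeal A B ↔
      algebraMap B L y ∈ IsLocalization.coeSubmodule L (differentIdeal A B) := by
    simp
  simp_rw [hcoe, coeSubmodule_differentIdeal A K, Submodule.mem_div_iff_forall_mul_mem,
    Submodule.mem_one, IsIntegralClosure.isIntegral_iff (A := B)]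

theorem algebraMap_prod_mem_differentIdeal {ι : Type*} [Fintype ι] {δ : ι → L} {s : ι → ℕ}
    (hs : ∀ i, s i ≠ 0) {a b : ι → A} (ha : ∀ i, a i ≠ 0)
    (hδ : ∀ i, δ i ^ s i * algebraMap A L (b i) = algebraMap A L (a i))
    (hgen : adjoin K (Set.range δ) = ⊤) :
    algebraMap A B (∏ i, (s i * (a i * b i))) ∈ differentIdeal A B := by
  classical
  have hinj : Function.Injective (algebraMap A L) := by
    rw [IsScalarTower.algebraMap_eq A K L]
    exact (algebraMap K L).injective.comp (IsFractionRing.injective A K)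
  have ha' (i : ι) : algebraMap A L (a i) ≠ 0 := (map_ne_zero_iff _ hinj).mpr (ha i)
  have hb' (i : ι) : algebraMap A L (b i) ≠ 0 := right_ne_zero_of_mul (hδ i ▸ ha' i)
  have hδ0 (i : ι) : δ i ≠ 0 := ne_zero_pow (hs i) (left_ne_zero_of_mul (hδ i ▸ ha' i))
  have hδinv (i : ι) : (δ i)⁻¹ ^ s i * algebraMap A L (a i) = algebraMap A L (b i) := by
    rw [← hδ, inv_pow, inv_mul_cancel_left₀ (pow_ne_zero _ (hδ0 i))]
  have hδK (i : ι) : δ i ^ s i ∈ (algebraMap K L).range :=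
    ⟨algebraMap A K (a i) / algebraMap A K (b i), by
      rw [map_div₀, ← IsScalarTower.algebraMap_apply, ← IsScalarTower.algebraMap_apply, ← hδ,
        mul_div_cancel_right₀ _ (hb' i)]⟩
  rw [mem_differentIdeal_iff_isIntegral_mul (K := K) (L := L)]
  intro x hx
  have hsum : algebraMap B L (algebraMap A B (∏ i, (s i * (a i * b i)))) * x =
      ∑ j ∈ Fintype.piFinset fun i ↦ range (s i),
        algebraMap K L (Algebra.trace K L (x * ∏ i, (algebraMap A L (a i) * (δ i)⁻¹ ^ j i))) *
          ∏ i, (algebraMap A L (b i) * δ i ^ j i) := by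
    simpa [← IsScalarTower.algebraMap_apply] using algebraMap_prod_mul_eq_sum_trace_mul hδ0 hδK hgen
      (fun i ↦ algebraMap A K (a i)) (fun i ↦ algebraMap A K (b i)) x
  rw [hsum]
  refine IsIntegral.sum _ fun j hj ↦ ?_
  have hjs (i : ι) : j i ≤ s i := (mem_range.mp (Fintype.mem_piFinset.mp hj i)).le
  have hmonomial : IsIntegral A (∏ i, (algebraMap A L (b i) * δ i ^ j i)) :=
    IsIntegral.prod _ fun i _ ↦ isIntegral_algebraMap_mul_pow (hs i) (hjs i) (hδ i)
  have hmonomial_inv : IsIntegral A (∏ i, (algebraMap A L (a i) * (δ i)⁻¹ ^ j i)) :=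
    IsIntegral.prod _ fun i _ ↦ isIntegral_algebraMap_mul_pow (hs i) (hjs i) (hδinv i)
  refine .mul (.algebraMap ?_) hmonomial
  refine Submodule.mem_traceDual_iff_isIntegral.mp hx _ ?_
  rwa [Submodule.mem_one, ← IsIntegralClosure.isIntegral_iff (R := A)]

end Different

section Degree

variable {K F ι : Type*} [Field K] [Field F] [Algebra K F] [Fintype ι]

theorem natDegree_minpoly_le_of_pow_mem_range {δ : F} {s : ℕ} (hs : s ≠ 0)
    (hδ : δ ^ s ∈ (algebraMap K F).range) :
    (minpoly K δ).natDegree ≤ s := by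
  obtain ⟨c, hc⟩ := hδ
  calc (minpoly K δ).natDegree ≤ (Polynomial.X ^ s - Polynomial.C c).natDegree :=
        Polynomial.natDegree_le_natDegree <| minpoly.degree_le_of_ne_zero K δ
          (Polynomial.X_pow_sub_C_ne_zero (Nat.pos_of_ne_zero hs) c) (by simp [hc])
    _ = s := Polynomial.natDegree_X_pow_sub_C

theorem natDegree_minpoly_le_totient {ζ : F} {n : ℕ} (hζ : IsPrimitiveRoot ζ n)
    (hn : n ≠ 0) :
    (minpoly K ζ).natDegree ≤ n.totient := by
  have hroot : Polynomial.aeval ζ (Polynomial.cyclotomic n K) = 0 := by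
    rw [Polynomial.aeval_def, ← Polynomial.eval_map, Polynomial.map_cyclotomic]
    exact hζ.isRoot_cyclotomic (Nat.pos_of_ne_zero hn)
  calc (minpoly K ζ).natDegree ≤ (Polynomial.cyclotomic n K).natDegree :=
        Polynomial.natDegree_le_natDegree <|
          minpoly.degree_le_of_ne_zero K ζ (Polynomial.cyclotomic_ne_zero n K) hroot
    _ = n.totient := Polynomial.natDegree_cyclotomic n K

theorem finrank_iSup_le_prod (E : ι → IntermediateField K F) :
    finrank K ↥(⨆ i, E i) ≤ ∏ i, finrank K (E i) := by
  classical
  rw [← sup_univ_eq_iSup]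
  induction (univ : Finset ι) using Finset.induction_on with
  | empty => rw [sup_empty, prod_empty, IntermediateField.finrank_bot]
  | insert i t hi ih =>
    rw [sup_insert, prod_insert hi]
    exact (finrank_sup_le _ _).trans (Nat.mul_le_mul_left _ ih)

theorem finrank_le_prod_natDegree_minpoly [Algebra.IsIntegral K F] {δ : ι → F}
    (hgen : adjoin K (Set.range δ) = ⊤) :
    finrank K F ≤ ∏ i, (minpoly K (δ i)).natDegree := by
  have hsup : ⨆ i, K⟮δ i⟯ = ⊤ := by
    rw [← adjoin_iUnion, Set.iUnion_singleton_eq_range, hgen]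
  rw [← finrank_top', ← hsup]
  simpa only [adjoin.finrank (Algebra.IsIntegral.isIntegral (R := K) (δ _))] using
    finrank_iSup_le_prod fun i ↦ K⟮δ i⟯

theorem finrank_le_totient_mul_prod [Algebra.IsIntegral K F] {ζ : F} {n : ℕ}
    (hζ : IsPrimitiveRoot ζ n) (hn : n ≠ 0) {δ : ι → F} {t : ι → ℕ} (ht : ∀ i, t i ≠ 0)
    (hδ : ∀ i, δ i ^ t i ∈ (algebraMap K F).range)
    (hgen : adjoin K (insert ζ (Set.range δ)) = ⊤) :
    finrank K F ≤ n.totient * ∏ i, t i := by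
  rw [← Option.range_elim] at hgen
  refine (finrank_le_prod_natDegree_minpoly hgen).trans ?_
  rw [Fintype.prod_option]
  exact Nat.mul_le_mul (natDegree_minpoly_le_totient hζ hn)
    (prod_le_prod' fun i _ ↦ natDegree_minpoly_le_of_pow_mem_range (ht i) (hδ i))

end Degree

section Discriminant

variable {K F : Type*} [Field K] [Field F] [NumberField K] [NumberField F] [Algebra K F]

theorem natAbs_discr_dvd_of_map_le_differentIdeal {I : Ideal (𝓞 K)}
    (hI : I.map (algebraMap (𝓞 K) (𝓞 F)) ≤ differentIdeal (𝓞 K) (𝓞 F)) :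
    (discr F).natAbs ∣ (Ideal.absNorm I * (discr K).natAbs) ^ finrank K F := by
  rw [natAbs_discr_eq_absNorm_differentIdeal_mul_natAbs_discr_pow K (𝓞 K) F (𝓞 F), mul_pow]
  refine mul_dvd_mul_right ?_ _
  rw [IsFractionRing.finrank_eq (𝓞 K) K (𝓞 F) F, ← Ideal.absNorm_algebraMap]
  exact Ideal.absNorm_dvd_absNorm_of_le hI

theorem log_abs_discr_le_of_mem_differentIdeal {c : 𝓞 K} (hc0 : c ≠ 0)
    (hc : algebraMap (𝓞 K) (𝓞 F) c ∈ differentIdeal (𝓞 K) (𝓞 F)) :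
    Real.log |(discr F : ℝ)| ≤
      finrank K F * (Real.log |(Algebra.norm ℚ (c : K) : ℝ)| + Real.log |(discr K : ℝ)|) := by
  have hspan : (Ideal.span {c}).map (algebraMap (𝓞 K) (𝓞 F)) ≤ differentIdeal (𝓞 K) (𝓞 F) := by
    rwa [Ideal.map_span, Set.image_singleton, Ideal.span_singleton_le_iff_mem]
  have hnorm : Algebra.norm ℤ c ≠ 0 := Algebra.norm_ne_zero_iff.mpr hc0
  have hdvd := natAbs_discr_dvd_of_map_le_differentIdeal hspan
  rw [Ideal.absNorm_span_singleton] at hdvd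
  have hle : |(discr F : ℝ)| ≤
      (|(Algebra.norm ℤ c : ℝ)| * |(discr K : ℝ)|) ^ finrank K F := by
    have hle_nat := Nat.le_of_dvd (pow_pos (Nat.mul_pos (Int.natAbs_pos.mpr hnorm)
      (Int.natAbs_pos.mpr (discr_ne_zero K))) _) hdvd
    simpa using Nat.cast_le (α := ℝ).mpr hle_nat
  rw [← Algebra.coe_norm_int, Rat.cast_intCast, ← Real.log_mul (by simpa using hnorm)
    (by simpa using discr_ne_zero K), ← Real.log_pow]
  exact Real.log_le_log (by simpa using discr_ne_zero F) hle

theorem log_abs_norm_nonneg {x : K} (hx : IsIntegral ℤ x) :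
    0 ≤ Real.log |(Algebra.norm ℚ x : ℝ)| := by
  obtain ⟨c, rfl⟩ : ∃ c : 𝓞 K, (c : K) = x := ⟨⟨x, hx⟩, rfl⟩
  rw [← Algebra.coe_norm_int, Rat.cast_intCast, ← Int.cast_abs]
  exact Real.log_intCast_nonneg _

theorem log_abs_norm_natCast_mul_prod {ι : Type*} [Fintype ι] {m : ℕ} (hm : m ≠ 0) {x : ι → K}
    (hx : ∀ i, x i ≠ 0) :
    Real.log |(Algebra.norm ℚ (m * ∏ i, x i) : ℝ)| =
      finrank ℚ K * Real.log m + ∑ i, Real.log |(Algebra.norm ℚ (x i) : ℝ)| := by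
  have hnorm (i : ι) : |(Algebra.norm ℚ (x i) : ℝ)| ≠ 0 := by
    simpa [Algebra.norm_eq_zero_iff] using hx i
  rw [← Real.log_pow, ← Real.log_prod fun i _ ↦ hnorm i, ← Real.log_mul (by positivity)
    (prod_ne_zero_iff.mpr fun i _ ↦ hnorm i), ← abs_prod, map_mul, map_prod,
    ← map_natCast (algebraMap ℚ K), Algebra.norm_algebraMap]
  push_cast
  rw [abs_mul, abs_of_nonneg (by positivity)]

theorem log_abs_discr_le_of_adjoin_radicals_eq_top {ι : Type*} [Fintype ι] {δ : ι → F}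
    {s : ι → ℕ} (hs : ∀ i, s i ≠ 0) {a b : ι → 𝓞 K} (ha : ∀ i, a i ≠ 0)
    (hδ : ∀ i, δ i ^ s i * algebraMap K F (b i) = algebraMap K F (a i))
    (hgen : adjoin K (Set.range δ) = ⊤) :
    Real.log |(discr F : ℝ)| ≤ finrank K F *
      (finrank ℚ K * Real.log (∏ i, s i : ℕ) + Real.log |(discr K : ℝ)| +
        ∑ i, Real.log |(Algebra.norm ℚ (a i * b i : K) : ℝ)|) := by
  have hb (i : ι) : b i ≠ 0 := fun hbi ↦ ha i (by simpa [hbi] using (hδ i).symm)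
  have hab (i : ι) : a i * b i ≠ 0 := mul_ne_zero (ha i) (hb i)
  have hprod : ∏ i, s i ≠ 0 := prod_ne_zero_iff.mpr fun i _ ↦ hs i
  have hmem := algebraMap_prod_mem_differentIdeal (A := 𝓞 K) (B := 𝓞 F) hs ha hδ hgen
  have hne : ∏ i, ((s i : 𝓞 K) * (a i * b i)) ≠ 0 :=
    prod_ne_zero_iff.mpr fun i _ ↦ mul_ne_zero (Nat.cast_ne_zero.mpr (hs i)) (hab i)
  have hcoe : ((∏ i, ((s i : 𝓞 K) * (a i * b i)) : 𝓞 K) : K) =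
      (∏ i, s i : ℕ) * ∏ i, (a i * b i : K) := by
    simp [prod_mul_distrib]
  have hx (i : ι) : (a i * b i : K) ≠ 0 := by simpa using hab i
  have hbound := log_abs_discr_le_of_mem_differentIdeal hne hmem
  rwa [hcoe, log_abs_norm_natCast_mul_prod hprod hx, add_right_comm] at hbound

theorem log_abs_discr_le_of_adjoin_primitiveRoot_radicals_eq_top {ι : Type*} [Fintype ι]
    {ζ : F} {n : ℕ} (hζ : IsPrimitiveRoot ζ n) (hn : n ≠ 0)
    {δ : ι → F} {t : ι → ℕ} (ht : ∀ i, t i ≠ 0) {a b : ι → 𝓞 K} (ha : ∀ i, a i ≠ 0)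
    (hb : ∀ i, b i ≠ 0) (hδ : ∀ i, δ i ^ t i = algebraMap K F (a i / b i))
    (hgen : adjoin K (insert ζ (Set.range δ)) = ⊤) :
    Real.log |(discr F : ℝ)| ≤ n.totient * (∏ i, (t i : ℝ)) *
      (finrank ℚ K * Real.log (n * ∏ i, (t i : ℝ)) + Real.log |(discr K : ℝ)| +
        ∑ i, Real.log |(Algebra.norm ℚ (a i * b i : K) : ℝ)|) := by
  have hdegree : (finrank K F : ℝ) ≤ n.totient * ∏ i, (t i : ℝ) := mod_cast
    finrank_le_totient_mul_prod hζ hn ht (fun i ↦ ⟨_, (hδ i).symm⟩) hgen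
  have hclear (i : ι) : δ i ^ t i * algebraMap K F (b i) = algebraMap K F (a i) := by
    rw [hδ, ← map_mul, div_mul_cancel₀ _ (by simpa using hb i)]
  have hdiscr : Real.log |(discr F : ℝ)| ≤ finrank K F *
      (finrank ℚ K * Real.log (n * ∏ i, (t i : ℝ)) + Real.log |(discr K : ℝ)| +
        ∑ i, Real.log |(Algebra.norm ℚ (a i * b i : K) : ℝ)|) := by
    have hoption := log_abs_discr_le_of_adjoin_radicals_eq_top (δ := fun o : Option ι ↦ o.elim ζ δ)
      (s := fun o ↦ o.elim n t) (a := fun o ↦ o.elim 1 a) (b := fun o ↦ o.elim 1 b)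
      (Option.forall.mpr ⟨hn, ht⟩) (Option.forall.mpr ⟨one_ne_zero, ha⟩)
      (Option.forall.mpr ⟨by simp [hζ.pow_eq_one], hclear⟩) (by rwa [Option.range_elim])
    simpa [Fintype.prod_option, Fintype.sum_option] using hoption
  have hdK : 0 ≤ Real.log |(discr K : ℝ)| := mod_cast Real.log_intCast_nonneg |discr K|
  have hnorm (i : ι) : 0 ≤ Real.log |(Algebra.norm ℚ (a i * b i : K) : ℝ)| :=
    log_abs_norm_nonneg ((a i).isIntegral_coe.mul (b i).isIntegral_coe)
  have hnt : 0 ≤ Real.log (n * ∏ i, (t i : ℝ)) := mod_cast Real.log_natCast_nonneg (n * ∏ i, t i)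
  have hsum := sum_nonneg fun i (_ : i ∈ univ) ↦ hnorm i
  refine hdiscr.trans (mul_le_mul_of_nonneg_right hdegree ?_)
  positivity

end Discriminant

theorem exists_eq_pow_mul_of_pow_eq_pow {R : Type*} [CommRing R] [IsDomain R] {ζ x y : R}
    {m n : ℕ} (hζ : IsPrimitiveRoot ζ n) (hn : n ≠ 0) (hm : m ∣ n) (h : x ^ m = y ^ m) :
    ∃ k, x = ζ ^ k * y := by
  obtain ⟨q, rfl⟩ := hm
  have hζq : IsPrimitiveRoot (ζ ^ q) m := hζ.pow (Nat.pos_of_ne_zero hn) (mul_comm m q)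
  have hx : x ∈ Polynomial.nthRoots m (y ^ m) :=
    (Polynomial.mem_nthRoots (Nat.pos_of_ne_zero (left_ne_zero_of_mul hn))).mpr h
  rw [hζq.nthRoots_eq rfl, Multiset.mem_map] at hx
  obtain ⟨k, -, rfl⟩ := hx
  exact ⟨q * k, by rw [pow_mul]⟩

theorem kummerField_eq_restrictScalars_adjoin (K : IntermediateField ℚ ℂ) {r n : ℕ} (hn : n ≠ 0)
    {t : Fin r → ℕ} (htn : ∀ i, t i ∣ n) {α δ : Fin r → ℂ} (hδ : ∀ i, δ i ^ t i = α i) :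
    kummerField K α n t =
      (adjoin K (insert (primRoot n) (Set.range δ))).restrictScalars ℚ := by
  have hζ : IsPrimitiveRoot (primRoot n) n := Complex.isPrimitiveRoot_exp n hn
  rw [kummerField, ← restrictScalars_adjoin_eq_sup]
  congr 1
  refine le_antisymm (adjoin_le_iff.mpr ?_) (adjoin.mono _ _ _ ?_)
  · have hζmem := subset_adjoin K _ (Set.mem_insert (primRoot n) (Set.range δ))
    rintro x (rfl | hx)
    · exact hζmem
    · obtain ⟨i, hi : x ^ t i = α i⟩ := Set.mem_iUnion.mp hx
      obtain ⟨k, rfl⟩ := exists_eq_pow_mul_of_pow_eq_pow hζ hn (htn i) (hi.trans (hδ i).symm)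
      exact mul_mem (pow_mem hζmem k)
        (subset_adjoin K _ (Set.mem_insert_of_mem _ (Set.mem_range_self i)))
  · rintro _ (rfl | ⟨i, rfl⟩)
    · exact Or.inl rfl
    · exact Or.inr (Set.mem_iUnion.mpr ⟨i, hδ i⟩)

theorem log_discr_kummer_le_general {r : ℕ} (K : IntermediateField ℚ ℂ) [NumberField K]
    (γ a b : Fin r → K) (ha : ∀ i, IsIntegral ℤ (a i)) (hb : ∀ i, IsIntegral ℤ (b i))
    (ha0 : ∀ i, a i ≠ 0) (hb0 : ∀ i, b i ≠ 0)
    (hγ : ∀ i, γ i = a i / b i) (n : ℕ) (t : Fin r → ℕ) (hn : n ≠ 0) (htn : ∀ i, t i ∣ n)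
    [NumberField (kummerField K (fun i ↦ (γ i : ℂ)) n t)] :
    Real.log |(discr (kummerField K (fun i ↦ (γ i : ℂ)) n t) : ℝ)| ≤
      n.totient * (∏ i, (t i : ℝ)) *
        (finrank ℚ K * Real.log (n * ∏ i, (t i : ℝ)) + Real.log |(discr K : ℝ)| +
          ∑ i, Real.log |(Algebra.norm ℚ (a i * b i : K) : ℝ)|) := by
  have ht (i : Fin r) : t i ≠ 0 := ne_zero_of_dvd_ne_zero hn (htn i)
  choose δ hδ using fun i ↦ IsAlgClosed.exists_pow_nat_eq (γ i : ℂ) (Nat.pos_of_ne_zero (ht i))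
  let F := adjoin K (insert (primRoot n) (Set.range δ))
  let e : kummerField K (fun i ↦ (γ i : ℂ)) n t ≃ₐ[ℚ] F :=
    equivOfEq (kummerField_eq_restrictScalars_adjoin K hn htn hδ)
  have : NumberField F := .of_ringEquiv _ _ e.toRingEquiv
  rw [discr_eq_discr_of_algEquiv _ e]
  let ζ : F := ⟨primRoot n, subset_adjoin K _ (Set.mem_insert _ _)⟩
  let δ' (i : Fin r) : F := ⟨δ i, subset_adjoin K _ (Set.mem_insert_of_mem _ ⟨i, rfl⟩)⟩
  have hζ : IsPrimitiveRoot ζ n :=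
    IsPrimitiveRoot.coe_submonoidClass_iff.mp (Complex.isPrimitiveRoot_exp n hn)
  have hδ' (i : Fin r) : δ' i ^ t i = algebraMap K F (γ i) := Subtype.ext (hδ i)
  have hgen : adjoin K (insert ζ (Set.range δ')) = ⊤ := by
    apply lift_injective
    rw [lift_adjoin, lift_top, Set.image_insert_eq, ← Set.range_comp]
    rfl
  refine log_abs_discr_le_of_adjoin_primitiveRoot_radicals_eq_top hζ hn ht
    (a := fun i ↦ ⟨a i, ha i⟩) (b := fun i ↦ ⟨b i, hb i⟩)
    (fun i ↦ RingOfIntegers.coe_ne_zero_iff.mp (ha0 i))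
    (fun i ↦ RingOfIntegers.coe_ne_zero_iff.mp (hb0 i)) (fun i ↦ ?_) hgen
  exact (hδ' i).trans (congrArg _ (hγ i))

/-- Let `K ⊆ ℂ` be a number field, and let `γ_1,…,γ_r ∈ K^×` be nonzero
and not roots of unity, written `γ_i = a_i/b_i` with `a_i, b_i` nonzero algebraic integers
of `K`. Let `t_1,…,t_r` be positive integers and `n` a common multiple of the `t_i`.
With `F := K(ζ_n, γ_1^{1/t_1},…,γ_r^{1/t_r})` and `t := t_1⋯t_r`, we have
`log|d_F| ≤ φ(n)·t·([K:ℚ]·log(n·t) + log|d_K| + 2·∑ᵢ log|N_{K/ℚ}(a_ib_i)|)`. -/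
theorem log_discr_kummer_le {r : ℕ} (K : IntermediateField ℚ ℂ) [NumberField K]
    (γ a b : Fin r → K)
    (hγ0 : ∀ i, γ i ≠ 0)
    (hroot : ∀ i, ∀ k : ℕ, 0 < k → γ i ^ k ≠ 1)
    (ha : ∀ i, IsIntegral ℤ (a i)) (hb : ∀ i, IsIntegral ℤ (b i))
    (ha0 : ∀ i, a i ≠ 0) (hb0 : ∀ i, b i ≠ 0)
    (hγ : ∀ i, γ i = a i / b i)
    (n : ℕ) (t : Fin r → ℕ) (hn : 0 < n) (ht : ∀ i, 0 < t i) (htn : ∀ i, t i ∣ n)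
    [NumberField (kummerField K (fun i => ((γ i : ℂ))) n t)] :
    Real.log |(NumberField.discr (kummerField K (fun i => ((γ i : ℂ))) n t) : ℝ)| ≤
      (Nat.totient n : ℝ) * (∏ i, (t i : ℝ)) *
        ((Module.finrank ℚ K : ℝ) * Real.log ((n : ℝ) * ∏ i, (t i : ℝ)) +
          Real.log |(NumberField.discr K : ℝ)| +
          2 * ∑ i, Real.log |((Algebra.norm ℚ (a i * b i) : ℚ) : ℝ)|) := by
  refine (log_discr_kummer_le_general K γ a b ha hb ha0 hb0 hγ n t hn.ne' htn).trans ?_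
  have hsum := sum_nonneg fun i (_ : i ∈ univ) ↦ log_abs_norm_nonneg ((ha i).mul (hb i))
  gcongr
  linarith
end
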